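/- arXiv:2011.11723 — 4 statements merged into one kernel-verified Lean document; each statement's English description precedes it below -/
import Mathlib

section
/- Fix an integer M ≥ 1 and real numbers μ > 0, ν > 0. Let A be the M × M real matrix (indexed by 1,…,M) with A(m,m) = μ + ν for 1 ≤ m ≤ M−1, A(M,M) = ν, A(m,m+1) = −μ for 1 ≤ m ≤ M−1, A(m+1,m) = −ν for 1 ≤ m ≤ M−1, and all other entries zero. Then A is invertible and its inverse is given entrywise by A⁻¹(m,n) = (1/ν^n) · Σ_{k=1}^{min(m,n)} μ^{n−k} ν^{k−1} for all 1 ≤ m, n ≤ M. -/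
open Finset Matrix

/-- The numerator of the `(m, n)` entry of the inverse, in one-based indices. -/
noncomputable def inverseNumerator (μ ν : ℝ) (n m : ℕ) : ℝ :=
  ∑ k ∈ Finset.Icc 1 (min m n), μ ^ (n - k) * ν ^ (k - 1)

lemma inverseNumerator_zero (μ ν : ℝ) (n : ℕ) : inverseNumerator μ ν n 0 = 0 := by
  simp [inverseNumerator]

lemma inverseNumerator_succ_sub (μ ν : ℝ) (n m : ℕ) :
    inverseNumerator μ ν n (m + 1) - inverseNumerator μ ν n m =
      if m < n then μ ^ (n - (m + 1)) * ν ^ m else 0 := by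
  unfold inverseNumerator
  split_ifs with h
  · rw [min_eq_left (Nat.succ_le_of_lt h), min_eq_left h.le,
      Finset.sum_Icc_succ_top (by omega)]
    simp
  · rw [min_eq_right (by omega), min_eq_right (by omega), sub_self]

/-- The tridiagonal matrix acts as a difference of weighted first differences. -/
lemma sum_tridiagonal_mul (M : ℕ) (μ ν : ℝ) (i : Fin M) (g : ℕ → ℝ) (hg : g 0 = 0) :
    ∑ k : Fin M,
      (if i = k then (if (i : ℕ) + 1 = M then ν else μ + ν)
        else if (k : ℕ) = (i : ℕ) + 1 then -μ
        else if (i : ℕ) = (k : ℕ) + 1 then -ν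
        else 0) * g ((k : ℕ) + 1) =
      ν * (g (i + 1) - g i) -
        if (i : ℕ) + 1 = M then 0 else μ * (g (i + 1 + 1) - g (i + 1)) := by
  obtain ⟨i, hi⟩ := i
  have hsplit : ∀ k : Fin M,
      (if (⟨i, hi⟩ : Fin M) = k then (if i + 1 = M then ν else μ + ν)
        else if (k : ℕ) = i + 1 then -μ
        else if i = (k : ℕ) + 1 then -ν
        else 0) * g ((k : ℕ) + 1) =
      (if (k : ℕ) = i then (if i + 1 = M then ν else μ + ν) * g (i + 1) else 0) +
        (if (k : ℕ) = i + 1 then -μ * g (i + 1 + 1) else 0) +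
        (if i = (k : ℕ) + 1 then -ν * g i else 0) := by
    rintro ⟨k, hk⟩
    simp only [Fin.mk.injEq]
    grind
  have hlower : ∑ k ∈ Finset.range M, (if i = k + 1 then -ν * g i else 0) = -ν * g i := by
    cases i with
    | zero => simp [hg]
    | succ i =>
      simp only [Nat.add_right_cancel_iff, Finset.sum_ite_eq, Finset.mem_range]
      rw [if_pos (by omega)]
  simp only [hsplit]
  rw [Fin.sum_univ_eq_sum_range (fun k : ℕ =>
      (if k = i then (if i + 1 = M then ν else μ + ν) * g (i + 1) else 0) +
        (if k = i + 1 then -μ * g (i + 1 + 1) else 0) +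
        (if i = k + 1 then -ν * g i else 0)),
    Finset.sum_add_distrib, Finset.sum_add_distrib, hlower]
  simp only [Finset.sum_ite_eq', Finset.mem_range, hi, if_true]
  by_cases h : i + 1 = M
  · simp only [h, lt_irrefl, if_true, if_false]
    ring
  · rw [if_neg h, if_neg h, if_pos (by omega)]
    ring

/-- The tridiagonal matrix `A = -B₀` of the birth-death battery process is invertible,
with inverse given entrywise by `A⁻¹(m,n) = ν⁻ⁿ ∑_{k=1}^{min(m,n)} μ^{n-k} ν^{k-1}`.
Here the index `i : Fin M` corresponds to the row/column `m = i + 1 ∈ {1, …, M}`. -/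
theorem stmt_1 (M : ℕ) (hM : 1 ≤ M) (μ ν : ℝ) (hμ : 0 < μ) (hν : 0 < ν)
    (A : Matrix (Fin M) (Fin M) ℝ)
    (hA : ∀ i j : Fin M,
      A i j =
        if i = j then (if (i : ℕ) + 1 = M then ν else μ + ν)
        else if (j : ℕ) = (i : ℕ) + 1 then -μ
        else if (i : ℕ) = (j : ℕ) + 1 then -ν
        else 0) :
    IsUnit A ∧
      ∀ i j : Fin M,
        A⁻¹ i j =
          (1 / ν ^ ((j : ℕ) + 1)) *
            ∑ k ∈ Finset.Icc 1 (min ((i : ℕ) + 1) ((j : ℕ) + 1)),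
              μ ^ ((j : ℕ) + 1 - k) * ν ^ (k - 1) := by
  have hmul : A * Matrix.of (fun i j : Fin M =>
      (1 / ν ^ ((j : ℕ) + 1)) * inverseNumerator μ ν (j + 1) (i + 1)) = 1 := by
    ext i j
    have hν' : ν ^ ((j : ℕ) + 1) ≠ 0 := by positivity
    simp only [Matrix.mul_apply, Matrix.of_apply, hA, mul_left_comm _ (1 / ν ^ ((j : ℕ) + 1))]
    rw [← Finset.mul_sum, sum_tridiagonal_mul M μ ν i (inverseNumerator μ ν (j + 1))
      (inverseNumerator_zero μ ν _), inverseNumerator_succ_sub, inverseNumerator_succ_sub,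
      Matrix.one_apply]
    have hi := i.isLt
    have hj := j.isLt
    rcases lt_trichotomy (i : ℕ) (j : ℕ) with h | h | h
    · obtain ⟨d, hd⟩ := Nat.exists_eq_add_of_lt h
      rw [if_pos (by omega), if_neg (by omega), if_pos (by omega),
        if_neg (fun e => h.ne (congrArg Fin.val e)),
        show (j : ℕ) + 1 - (i + 1) = d + 1 by omega,
        show (j : ℕ) + 1 - (i + 1 + 1) = d by omega]
      ring
    · obtain rfl := Fin.ext h
      simp only [lt_add_iff_pos_right, zero_lt_one, lt_irrefl, if_true, if_false, mul_zero,
        ite_self, sub_zero, Nat.sub_self, pow_zero, one_mul]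
      rw [← pow_succ', one_div_mul_cancel hν']
    · rw [if_neg (by omega), if_neg (by omega : ¬ (i : ℕ) + 1 < j + 1),
        if_neg (fun e => h.ne' (congrArg Fin.val e))]
      simp
  refine ⟨IsUnit.of_mul_eq_one _ hmul, fun i j => ?_⟩
  rw [Matrix.inv_eq_right_inv hmul]
  rfl
end

section
/- Let M ≥ 1 and m with 1 ≤ m ≤ M be integers, and let μ, ν be positive reals with μ ≠ ν. Then Σ_{n=1}^{M} (1/ν^n) · Σ_{k=1}^{min(m,n)} μ^{n−k} ν^{k−1} = [ (μ/ν)^{M+1} · (1 − (μ/ν)^{−m}) ] / (1 − μ/ν) · 1/(ν − μ) − m/(μ − ν). -/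
open Finset

/-- For fixed `k`, the summands of the birth-death row sum form a geometric progression in `n`. -/
lemma sum_Icc_birth_death_term {μ ν : ℝ} (hν : ν ≠ 0) (hne : μ ≠ ν) {k M : ℕ}
    (hk : 1 ≤ k) (hkM : k ≤ M) :
    ∑ n ∈ Icc k M, (1 / ν ^ n) * (μ ^ (n - k) * ν ^ (k - 1)) =
      (1 - (μ / ν) ^ (M + 1 - k)) / (ν - μ) := by
  have hr : μ / ν ≠ 1 := fun h => hne ((div_eq_one_iff_eq hν).mp h)
  have hd : ν - μ ≠ 0 := sub_ne_zero.mpr hne.symm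
  have hterm : ∀ i, (1 / ν ^ (k + i)) * (μ ^ (k + i - k) * ν ^ (k - 1)) =
      (1 / ν) * (μ / ν) ^ i := by
    intro i
    obtain ⟨j, rfl⟩ := Nat.exists_eq_add_of_le' hk
    rw [Nat.add_sub_cancel_left, Nat.add_sub_cancel, div_pow]
    field_simp
    ring
  have hIcc : Icc k M = Ico k (M + 1) := by
    ext
    simp only [mem_Icc, mem_Ico]
    omega
  rw [hIcc, sum_Ico_eq_sum_range, sum_congr rfl fun i _ => hterm i, ← mul_sum,
    geom_sum_eq hr]
  have hr' : μ / ν - 1 = -((ν - μ) / ν) := by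
    field_simp
    ring
  rw [hr']
  field_simp
  ring

lemma sum_Icc_one_sub_pow_div {μ ν : ℝ} (hμ : μ ≠ 0) (hν : ν ≠ 0) (hne : μ ≠ ν) {m M : ℕ}
    (hmM : m ≤ M) :
    ∑ k ∈ Icc 1 m, (1 - (μ / ν) ^ (M + 1 - k)) / (ν - μ) =
      ((μ / ν) ^ (M + 1) * (1 - (μ / ν) ^ (-(m : ℤ)))) / (1 - μ / ν) * (1 / (ν - μ))
        - (m : ℝ) / (μ - ν) := by
  have hd : ν - μ ≠ 0 := sub_ne_zero.mpr hne.symm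
  have hr0 : μ / ν ≠ 0 := div_ne_zero hμ hν
  have hr : 1 - μ / ν ≠ 0 :=
    sub_ne_zero.mpr fun h => hne ((div_eq_one_iff_eq hν).mp h.symm)
  rw [← neg_sub ν μ]
  generalize μ / ν = r at *
  generalize ν - μ = d at *
  induction m with
  | zero => simp
  | succ m ih =>
    rw [sum_Icc_succ_top (by omega), ih (by omega)]
    obtain ⟨j, rfl⟩ := Nat.exists_eq_add_of_le hmM
    rw [show m + 1 + j + 1 - (m + 1) = j + 1 by omega]
    simp only [zpow_neg, zpow_natCast]
    push_cast
    field_simp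
    ring

/-- Row-sum identity for the inverse of the birth-death matrix: the mean ON time
`E[T_on(m)]` equals the closed form of Eq. (9) of the paper. -/
theorem stmt_3 (M m : ℕ) (hm : 1 ≤ m) (hmM : m ≤ M) (μ ν : ℝ)
    (hμ : 0 < μ) (hν : 0 < ν) (hne : μ ≠ ν) :
    ∑ n ∈ Finset.Icc 1 M,
        (1 / ν ^ n) * ∑ k ∈ Finset.Icc 1 (min m n), μ ^ (n - k) * ν ^ (k - 1) =
      ((μ / ν) ^ (M + 1) * (1 - (μ / ν) ^ (-(m : ℤ)))) / (1 - μ / ν) * (1 / (ν - μ))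
        - (m : ℝ) / (μ - ν) := by
  rw [← sum_Icc_one_sub_pow_div hμ.ne' hν.ne' hne hmM]
  simp only [mul_sum]
  rw [sum_comm' (t' := Icc 1 m) (s' := fun k => Icc k M)
    (by intro n k; simp only [mem_Icc, le_min_iff]; omega)]
  refine sum_congr rfl fun k hk => ?_
  rw [mem_Icc] at hk
  exact sum_Icc_birth_death_term hν.ne' hne hk.1 (hk.2.trans hmM)
end

section
/- Let N_T ≥ 1 be an integer and let μ, ν be positive reals with μ < ν. For each integer M₀ ≥ N_T, define η(M₀) = 1 / ( 1 + N_T·(1 − μ/ν)² / ( (μ/ν)^{M₀+2}·(1 − (μ/ν)^{−N_T}) + (μ/ν)·(1 − μ/ν)·N_T ) ). Then η is monotonically increasing in M₀: for all integers M₀, M₀′ with N_T ≤ M₀ ≤ M₀′, one has η(M₀) ≤ η(M₀′). -/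
/-- The denominator in the energy availability is positive when the load ratio `r` is
in `(0, 1)`. -/
lemma availability_denom_pos {r : ℝ} (h0 : 0 < r) (h1 : r < 1) {N M : ℕ} (hN : 1 ≤ N)
    (hM : N ≤ M) :
    0 < r ^ (M + 2) * (1 - r ^ (-(N : ℤ))) + r * (1 - r) * (N : ℝ) := by
  obtain ⟨k, rfl⟩ := Nat.exists_eq_add_of_le hM
  have hNpos : (0 : ℝ) < N := by exact_mod_cast hN
  have hbern : 1 - r ^ N ≤ N * (1 - r) := by
    have := one_add_mul_le_pow (a := r - 1) (by linarith) N
    rw [add_sub_cancel] at this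
    linarith
  have hrewrite : r ^ (N + k + 2) * (1 - r ^ (-(N : ℤ))) = -(r ^ (k + 2) * (1 - r ^ N)) := by
    rw [zpow_neg, zpow_natCast]
    field_simp
    ring
  have hpow : r ^ (k + 2) ≤ r ^ 2 := pow_le_pow_of_le_one h0.le h1.le (by omega)
  have hbound : r ^ (k + 2) * (1 - r ^ N) ≤ r ^ 2 * (N * (1 - r)) :=
    mul_le_mul hpow hbern (sub_nonneg.2 (pow_le_one₀ h0.le h1.le)) (by positivity)
  have hgap : 0 < r * (1 - r) * N * (1 - r) := by
    have := sub_pos.2 h1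
    positivity
  rw [hrewrite]
  linarith

/-- When μ < ν, the energy availability `η(M₀)` of Theorem 1 is monotonically
increasing in the storage capacity `M₀`. -/
theorem stmt_8 (N_T : ℕ) (hN : 1 ≤ N_T) (μ ν : ℝ)
    (hμ : 0 < μ) (hν : 0 < ν) (hlt : μ < ν)
    (η : ℕ → ℝ)
    (hη : ∀ M₀ : ℕ, N_T ≤ M₀ →
      η M₀ = 1 / (1 + (N_T : ℝ) * (1 - μ / ν) ^ 2 /
        ((μ / ν) ^ (M₀ + 2) * (1 - (μ / ν) ^ (-(N_T : ℤ)))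
          + (μ / ν) * (1 - μ / ν) * (N_T : ℝ)))) :
    ∀ M₀ M₀' : ℕ, N_T ≤ M₀ → M₀ ≤ M₀' → η M₀ ≤ η M₀' := by
  intro M M' hM hMM'
  have h0 : 0 < μ / ν := div_pos hμ hν
  have h1 : μ / ν < 1 := (div_lt_one hν).2 hlt
  rw [hη M hM, hη M' (hM.trans hMM')]
  generalize μ / ν = r at h0 h1
  have hpos := availability_denom_pos h0 h1 hN hM
  have hpos' := availability_denom_pos h0 h1 hN (hM.trans hMM')
  have hfactor : 1 - r ^ (-(N_T : ℤ)) ≤ 0 := by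
    rw [zpow_neg, zpow_natCast]
    exact sub_nonpos.2 ((one_le_inv₀ (pow_pos h0 _)).2 (pow_le_one₀ h0.le h1.le))
  have hpow : r ^ (M' + 2) ≤ r ^ (M + 2) := pow_le_pow_of_le_one h0.le h1.le (by omega)
  have hdenom := mul_le_mul_of_nonpos_right hpow hfactor
  apply one_div_le_one_div_of_le (by positivity)
  gcongr 1 + ?_
  exact div_le_div_of_nonneg_left (by positivity) hpos (by linarith)
end

section
/- Let N_T ≥ 1 and M₀ ≥ N_T be integers and let ν > 0 be a real number. For μ ∈ (0, ν), define η(μ) = 1 / ( 1 + N_T·(1 − μ/ν)² / ( (μ/ν)^{M₀+2}·(1 − (μ/ν)^{−N_T}) + (μ/ν)·(1 − μ/ν)·N_T ) ). Then η is monotonically increasing in μ on (0, ν): for all 0 < μ ≤ μ′ < ν, one has η(μ) ≤ η(μ′). -/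
/-- Factorization of a lacunary polynomial through a double geometric sum. -/
lemma pow_sub_pow_add_eq_one_sub_sq_mul_sum {R : Type*} [CommRing R] (x : R) (N k : ℕ) :
    x ^ (k + N + 2) - x ^ (k + 2) + x * (1 - x) * (N : R)
      = (1 - x) ^ 2 *
        ∑ j ∈ Finset.range N, x * ∑ i ∈ Finset.range (k + 1 + j), x ^ i := by
  induction N with
  | zero => simp
  | succ N ih =>
    rw [Finset.sum_range_succ, mul_add, ← ih]
    have hgeom := mul_neg_geom_sum x (k + 1 + N)
    push_cast
    linear_combination -(x * (1 - x)) * hgeom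

/-- The energy availability `η(μ)` of Theorem 1 is monotonically increasing in the
energy harvesting rate `μ` on `(0, ν)`. -/
theorem stmt_9 (N_T M₀ : ℕ) (hN : 1 ≤ N_T) (hNM : N_T ≤ M₀) (ν : ℝ) (hν : 0 < ν)
    (η : ℝ → ℝ)
    (hη : ∀ μ : ℝ, 0 < μ → μ < ν →
      η μ = 1 / (1 + (N_T : ℝ) * (1 - μ / ν) ^ 2 /
        ((μ / ν) ^ (M₀ + 2) * (1 - (μ / ν) ^ (-(N_T : ℤ)))
          + (μ / ν) * (1 - μ / ν) * (N_T : ℝ)))) :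
    ∀ μ μ' : ℝ, 0 < μ → μ ≤ μ' → μ' < ν → η μ ≤ η μ' := by
  obtain ⟨k, rfl⟩ := Nat.exists_eq_add_of_le' hNM
  let P : ℝ → ℝ := fun x =>
    ∑ j ∈ Finset.range N_T, x * ∑ i ∈ Finset.range (k + 1 + j), x ^ i
  have hP : ∀ x, 0 < x → 0 < P x := fun x hx =>
    Finset.sum_pos
      (fun j _ => mul_pos hx (Finset.sum_pos (fun i _ => pow_pos hx i)
        (Finset.nonempty_range_iff.mpr (by omega))))
      (Finset.nonempty_range_iff.mpr (by omega))
  have hη' : ∀ μ, 0 < μ → μ < ν → η μ = 1 / (1 + (N_T : ℝ) / P (μ / ν)) := by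
    intro μ h0 h1
    rw [hη μ h0 h1]
    have hx0 : 0 < μ / ν := div_pos h0 hν
    have hx1 : 1 - μ / ν ≠ 0 := (sub_pos.mpr ((div_lt_one hν).mpr h1)).ne'
    generalize μ / ν = x at hx0 hx1
    have hpow : x ^ (k + N_T + 2) * (1 - x ^ (-(N_T : ℤ)))
        = x ^ (k + N_T + 2) - x ^ (k + 2) := by
      rw [zpow_neg, zpow_natCast]
      field_simp
      ring
    rw [hpow, pow_sub_pow_add_eq_one_sub_sq_mul_sum, mul_comm (N_T : ℝ),
      mul_div_mul_left _ _ (pow_ne_zero 2 hx1)]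
  intro μ μ' h0 hle h1
  rw [hη' μ h0 (hle.trans_lt h1), hη' μ' (h0.trans_le hle) h1]
  have hx0 : 0 < μ / ν := div_pos h0 hν
  have hx : μ / ν ≤ μ' / ν := by gcongr
  have hx0' := hx0.trans_le hx
  have hmono : P (μ / ν) ≤ P (μ' / ν) :=
    Finset.sum_le_sum fun j _ => mul_le_mul hx
      (Finset.sum_le_sum fun i _ => pow_le_pow_left₀ hx0.le hx i)
      (Finset.sum_nonneg fun i _ => pow_nonneg hx0.le i) hx0'.le
  have hpos := hP _ hx0
  have hpos' := hP _ hx0'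
  clear_value P
  gcongr
end
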